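/- arXiv:1302.6298 — 2 statements merged into one kernel-verified Lean document; each statement's English description precedes it below -/
import Mathlib

section
/- In U = U_q⁺(C₂) the root vectors satisfy the commutation relations: b₂b₁ = q⁻² b₁b₂; b₃b₁ = −q⁻¹⟨1⟩[2]₁⁻¹ b₂² + b₁b₃; b₄b₁ = b₂ + q² b₁b₄; b₃b₂ = q⁻² b₂b₃; b₄b₂ = [2]₁ b₃ + b₂b₄; and b₄b₃ = q⁻² b₃b₄. -/
/-!
Write `[a, b]_r = ab − r ba`. The `q`-Serre relations of type `C₂` say exactly that
`[[e₁, e₂]_{q²}, e₂]_{q⁻²} = 0` and `[e₁, [e₁, [e₁, e₂]_{q²}]₁]_{q⁻²} = 0`, which are the relations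
for `b₂b₁` and `b₄b₃`. Those for `b₄b₁` and `b₄b₂` restate the definitions of `b₂` and `b₃`. The
other two follow from the twisted Leibniz rules: expanding `[[e₁, b₂]₁, e₂]₁` gives `b₃b₁`, and
applying `[e₁, ·]₁` to both sides of that relation gives `b₃b₂`.
-/

noncomputable section

/-- The base field `K = ℚ(q)`, rational functions over `ℚ`. -/
abbrev K : Type := RatFunc ℚ

/-- The indeterminate `q`. -/
def q : K := RatFunc.X

/-- `⟨m⟩ = q^m − q^{−m}`. -/
def qbra (m : ℕ) : K := q ^ m - q⁻¹ ^ m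

/-- `[m]₁ = ⟨m⟩/⟨1⟩`. -/
def qn1 (m : ℕ) : K := qbra m / qbra 1

/-- `[m]₂ = ⟨2m⟩/⟨2⟩`. -/
def qn2 (m : ℕ) : K := qbra (2 * m) / qbra 2

/-- Generators of the free algebra on two letters. -/
def g (i : Fin 2) : FreeAlgebra K (Fin 2) := FreeAlgebra.ι K i

/-- The `q`-Serre relations of type `C₂`. -/
inductive SerreC2 : FreeAlgebra K (Fin 2) → FreeAlgebra K (Fin 2) → Prop
  | rel1 : SerreC2
      (g 0 ^ 3 * g 1 - qn1 3 • (g 0 ^ 2 * g 1 * g 0) + qn1 3 • (g 0 * g 1 * g 0 ^ 2)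
        - g 1 * g 0 ^ 3) 0
  | rel2 : SerreC2
      (g 1 ^ 2 * g 0 - qn2 2 • (g 1 * g 0 * g 1) + g 0 * g 1 ^ 2) 0

/-- `U_q⁺(C₂)`: the free algebra on `e₁, e₂` modulo the `q`-Serre relations. -/
abbrev UC2 : Type := RingQuot SerreC2

/-- The Chevalley generator `e₁`. -/
def e1 : UC2 := RingQuot.mkAlgHom K SerreC2 (g 0)

/-- The Chevalley generator `e₂`. -/
def e2 : UC2 := RingQuot.mkAlgHom K SerreC2 (g 1)

/-- The root vector `b₁ = e₂`. -/
def b1 : UC2 := e2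

/-- The root vector `b₂ = e₁e₂ − q² e₂e₁`. -/
def b2 : UC2 := e1 * e2 - (q ^ 2) • (e2 * e1)

/-- The root vector `b₃ = [2]₁⁻¹ (e₁b₂ − b₂e₁)`. -/
def b3 : UC2 := (qn1 2)⁻¹ • (e1 * b2 - b2 * e1)

/-- The root vector `b₄ = e₁`. -/
def b4 : UC2 := e1

section QCommutator

variable {R A : Type*} [CommRing R] [Ring A] [Algebra R A]

/-- The `r`-commutator `[a, b]_r = ab − r ba`, encoded as a bilinear map in `(a, b)`. -/
def qCommutator (r : R) : A →ₗ[R] A →ₗ[R] A :=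
  LinearMap.mul R A - r • (LinearMap.mul R A).flip

theorem qCommutator_apply (r : R) (a b : A) : qCommutator r a b = a * b - r • (b * a) := rfl

theorem qCommutator_eq_iff {r : R} {a b c : A} :
    qCommutator r a b = c ↔ a * b = c + r • (b * a) :=
  sub_eq_iff_eq_add

theorem qCommutator_eq_zero_iff {r : R} {a b : A} :
    qCommutator r a b = 0 ↔ a * b = r • (b * a) :=
  sub_eq_zero

theorem qCommutator_one_eq_iff {a b c : A} :
    qCommutator (1 : R) a b = c ↔ a * b = c + b * a := by
  rw [qCommutator_eq_iff, one_smul]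

theorem qCommutator_mul_right (r s : R) (a b c : A) :
    qCommutator (r * s) a (b * c) = qCommutator r a b * c + r • (b * qCommutator s a c) := by
  simp only [qCommutator_apply, sub_mul, mul_sub, smul_mul_assoc, mul_smul_comm, mul_assoc]
  module

theorem qCommutator_mul_left (r s : R) (a b c : A) :
    qCommutator (r * s) (a * b) c = a * qCommutator s b c + s • (qCommutator r a c * b) := by
  simp only [qCommutator_apply, sub_mul, mul_sub, smul_mul_assoc, mul_smul_comm, mul_assoc]
  module

theorem qCommutator_qCommutator_self_right (r s : R) (a b : A) :
    qCommutator s (qCommutator r a b) b =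
      a * b ^ 2 - (r + s) • (b * a * b) + (r * s) • (b ^ 2 * a) := by
  simp only [qCommutator_apply, sub_mul, mul_sub, smul_mul_assoc, mul_smul_comm, mul_assoc, pow_two]
  module

theorem qCommutator_self_left_iterate_three (r s t : R) (a b : A) :
    qCommutator t a (qCommutator s a (qCommutator r a b)) =
      a ^ 3 * b - (r + s + t) • (a ^ 2 * b * a) + (r * s + r * t + s * t) • (a * b * a ^ 2)
        - (r * s * t) • (b * a ^ 3) := by
  simp only [qCommutator_apply, sub_mul, mul_sub, smul_mul_assoc, mul_smul_comm, mul_assoc,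
    pow_succ, pow_zero, one_mul]
  module

variable {r p : R} {a b x y : A}

theorem qCommutator_qCommutator_eq_zero_of_quadratic_serre (hrp : r * p = 1)
    (hserre : b ^ 2 * a - (r + p) • (b * a * b) + a * b ^ 2 = 0) :
    qCommutator p (qCommutator r a b) b = 0 := by
  rw [qCommutator_qCommutator_self_right, hrp, one_smul, ← hserre]
  abel

theorem qCommutator_iterate_eq_zero_of_cubic_serre (hrp : r * p = 1)
    (hserre : a ^ 3 * b - (r + 1 + p) • (a ^ 2 * b * a) + (r + 1 + p) • (a * b * a ^ 2)
      - b * a ^ 3 = 0) :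
    qCommutator p a (qCommutator (1 : R) a (qCommutator r a b)) = 0 := by
  rw [qCommutator_self_left_iterate_three, mul_one, one_mul, hrp, one_smul, ← hserre]

theorem qCommutator_one_qCommutator_one_eq_smul_sq (hrp : r * p = 1)
    (hab : qCommutator r a b = x) (hxb : qCommutator p x b = 0) :
    qCommutator (1 : R) (qCommutator (1 : R) a x) b = (p - 1) • x ^ 2 := by
  have hax : qCommutator (1 : R) (a * x) b = p • x ^ 2 := by
    rw [← hrp, qCommutator_mul_left, hab, hxb, mul_zero, zero_add, pow_two]
  have hxa : qCommutator (1 : R) (x * a) b = x ^ 2 := by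
    rw [← hrp, mul_comm r p, qCommutator_mul_left, hab, hxb, zero_mul, smul_zero, add_zero, pow_two]
  rw [qCommutator_apply 1 a x, one_smul, map_sub, LinearMap.sub_apply, hax, hxa, sub_smul, one_smul]

theorem qCommutator_eq_zero_of_qCommutator_one_eq_smul_sq (hrp : r * p = 1)
    (hab : qCommutator r a b = x) (hax : qCommutator (1 : R) a x = y)
    (hay : qCommutator p a y = 0) (hyb : qCommutator (1 : R) y b = (p - 1) • x ^ 2) :
    qCommutator p y x = 0 := by
  have hayb : qCommutator (1 : R) a (y * b) = p • (y * x) := by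
    rw [← hrp, mul_comm r p, qCommutator_mul_right, hab, hay, zero_mul, zero_add]
  have haby : qCommutator (1 : R) a (b * y) = x * y := by
    rw [← hrp, qCommutator_mul_right, hab, hay, mul_zero, smul_zero, add_zero]
  have haxx : qCommutator (1 : R) a (x ^ 2) = y * x + x * y := by
    rw [pow_two, ← mul_one (1 : R), qCommutator_mul_right, hax, one_smul]
  have hsum : (p - 1) • (y * x + x * y) = p • (y * x) - x * y :=
    calc (p - 1) • (y * x + x * y)
      _ = qCommutator (1 : R) a ((p - 1) • x ^ 2) := by rw [map_smul, haxx]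
      _ = qCommutator (1 : R) a (y * b - b * y) := by rw [← hyb, qCommutator_apply 1 y b, one_smul]
      _ = p • (y * x) - x * y := by rw [map_sub, hayb, haby]
  rw [qCommutator_apply]
  linear_combination (norm := module) -hsum

end QCommutator

/-- Here `r`, `p`, `t` play the roles of `q²`, `q⁻²`, `[2]₁`, and `a`, `b`, `x`, `y` those of
`e₁`, `e₂`, `b₂`, `b₃`. -/
theorem statement11_general {R A : Type*} [CommRing R] [Ring A] [Algebra R A] {r p s t : R}
    {a b x y : A} (hrp : r * p = 1) (hts : t * s = 1)
    (hx : x = a * b - r • (b * a)) (hy : y = s • (a * x - x * a))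
    (hcubic : a ^ 3 * b - (r + 1 + p) • (a ^ 2 * b * a) + (r + 1 + p) • (a * b * a ^ 2)
      - b * a ^ 3 = 0)
    (hquadratic : b ^ 2 * a - (r + p) • (b * a * b) + a * b ^ 2 = 0) :
    x * b = p • (b * x) ∧
    y * b = ((p - 1) * s) • x ^ 2 + b * y ∧
    a * b = x + r • (b * a) ∧
    y * x = p • (x * y) ∧
    a * x = t • y + x * a ∧
    a * y = p • (y * a) := by
  have hab : qCommutator r a b = x := hx.symm
  have hy' : y = s • qCommutator (1 : R) a x := by rw [hy, qCommutator_apply, one_smul]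
  have hxb : qCommutator p x b = 0 :=
    hab ▸ qCommutator_qCommutator_eq_zero_of_quadratic_serre hrp hquadratic
  have haax : qCommutator p a (qCommutator (1 : R) a x) = 0 :=
    hab ▸ qCommutator_iterate_eq_zero_of_cubic_serre hrp hcubic
  have haxb := qCommutator_one_qCommutator_one_eq_smul_sq hrp hab hxb
  have haxx := qCommutator_eq_zero_of_qCommutator_one_eq_smul_sq hrp hab rfl haax haxb
  refine ⟨qCommutator_eq_zero_iff.mp hxb, (qCommutator_one_eq_iff (R := R)).mp ?_,
    qCommutator_eq_iff.mp hab, qCommutator_eq_zero_iff.mp ?_,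
    (qCommutator_one_eq_iff (R := R)).mp ?_, qCommutator_eq_zero_iff.mp ?_⟩
  · rw [hy', map_smul, LinearMap.smul_apply, haxb, smul_smul, mul_comm]
  · rw [hy', map_smul, LinearMap.smul_apply, haxx, smul_zero]
  · rw [hy', smul_smul, hts, one_smul]
  · rw [hy', map_smul, haax, smul_zero]

theorem q_ne_zero : q ≠ 0 := RatFunc.X_ne_zero

theorem q_pow_ne_one {m : ℕ} (hm : m ≠ 0) : q ^ m ≠ 1 := by
  intro h
  have hX : (Polynomial.X : Polynomial ℚ) ^ m = 1 :=
    RatFunc.algebraMap_injective ℚ <| by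
      rwa [map_pow, RatFunc.algebraMap_X, map_one]
  have hdeg := congrArg Polynomial.natDegree hX
  rw [Polynomial.natDegree_X_pow, Polynomial.natDegree_one] at hdeg
  exact hm hdeg

theorem qbra_ne_zero {m : ℕ} (hm : m ≠ 0) : qbra m ≠ 0 := by
  intro h
  refine q_pow_ne_one (mul_ne_zero two_ne_zero hm) ?_
  calc q ^ (2 * m) = q ^ m * q ^ m := by rw [two_mul, pow_add]
    _ = q ^ m * q⁻¹ ^ m := by rw [sub_eq_zero.mp h]
    _ = 1 := by rw [← mul_pow, mul_inv_cancel₀ q_ne_zero, one_pow]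

theorem qn1_ne_zero {m : ℕ} (hm : m ≠ 0) : qn1 m ≠ 0 :=
  div_ne_zero (qbra_ne_zero hm) (qbra_ne_zero one_ne_zero)

theorem q_sq_mul_q_zpow_neg_two : q ^ 2 * q ^ (-2 : ℤ) = 1 :=
  mul_inv_cancel₀ (pow_ne_zero 2 q_ne_zero)

theorem q_zpow_neg_two_sub_one : q ^ (-2 : ℤ) - 1 = -(q⁻¹ * qbra 1) := by
  have := q_ne_zero
  rw [qbra]
  field_simp
  ring

theorem qn1_three : qn1 3 = q ^ 2 + 1 + q ^ (-2 : ℤ) := by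
  have := q_ne_zero
  rw [qn1, div_eq_iff (qbra_ne_zero one_ne_zero), qbra, qbra]
  field_simp
  ring

theorem qn2_two : qn2 2 = q ^ 2 + q ^ (-2 : ℤ) := by
  have := q_ne_zero
  rw [qn2, div_eq_iff (qbra_ne_zero two_ne_zero), qbra, qbra, inv_pow, inv_pow]
  field_simp
  ring

theorem cubic_serre_e1_e2 :
    e1 ^ 3 * e2 - (q ^ 2 + 1 + q ^ (-2 : ℤ)) • (e1 ^ 2 * e2 * e1)
      + (q ^ 2 + 1 + q ^ (-2 : ℤ)) • (e1 * e2 * e1 ^ 2) - e2 * e1 ^ 3 = 0 := by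
  have h := RingQuot.mkAlgHom_rel K SerreC2.rel1
  simp only [map_sub, map_add, map_mul, map_pow, map_smul, map_zero, qn1_three] at h
  exact h

theorem quadratic_serre_e1_e2 :
    e2 ^ 2 * e1 - (q ^ 2 + q ^ (-2 : ℤ)) • (e2 * e1 * e2) + e1 * e2 ^ 2 = 0 := by
  have h := RingQuot.mkAlgHom_rel K SerreC2.rel2
  simp only [map_sub, map_add, map_mul, map_pow, map_smul, map_zero, qn2_two] at h
  exact h

/-- commutation relations among the root vectors of `U_q⁺(C₂)`. -/
theorem statement11 :
    b2 * b1 = (q ^ (-2 : ℤ)) • (b1 * b2) ∧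
    b3 * b1 = (-(q⁻¹ * qbra 1 * (qn1 2)⁻¹)) • (b2 ^ 2) + b1 * b3 ∧
    b4 * b1 = b2 + (q ^ 2) • (b1 * b4) ∧
    b3 * b2 = (q ^ (-2 : ℤ)) • (b2 * b3) ∧
    b4 * b2 = qn1 2 • b3 + b2 * b4 ∧
    b4 * b3 = (q ^ (-2 : ℤ)) • (b3 * b4) := by
  rw [← neg_mul, ← q_zpow_neg_two_sub_one]
  exact statement11_general q_sq_mul_q_zpow_neg_two (mul_inv_cancel₀ (qn1_ne_zero two_ne_zero))
    rfl rfl cubic_serre_e1_e2 quadratic_serre_e1_e2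
end
end

section
/- In U = U_q⁺(C₂), write B(a,b,c,d) = b₁^a b₂^b b₃^c b₄^d for a,b,c,d ∈ ℕ, with the convention that any term B(a',b',c',d') having a negative index is read as 0 (its scalar coefficient then vanishes). Then: B(a,b,c,d)·e₁ = B(a,b,c,d+1); B(a,b,c,d)·e₂ = [d]₁ q^{d−2c−1} B(a,b+1,c,d−1) + q^{2(d−b)} B(a+1,b,c,d) − ⟨1⟩ q^{2d−2c+1}[c]₂[2]₁⁻¹ B(a,b+2,c−1,d) + [d−1]₁[d]₁ B(a,b,c+1,d−2); e₁·B(a,b,c,d) = [2]₁[b]₁ q^{2a−b+1} B(a,b−1,c+1,d) + q^{2a−2c} B(a,b,c,d+1) + [a]₂ B(a−1,b+1,c,d); and e₂·B(a,b,c,d) = B(a+1,b,c,d). -/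
/-!
The two Serre relations say that `b₂` skew-commutes with `e₂` and `b₃` with `e₁`; straightening
`e₁ b₃ e₂` in two ways then shows that `b₂` and `b₃` skew-commute as well. Hence if `(x, y)` is one
of the pairs `(e₁, e₂)`, `(e₁, b₂)`, `(b₃, e₂)`, then `x y = s y x + z`, where `z` skew-commutes
with the generator raised to a power, and moving `x` past `yⁿ` (or `xⁿ` past `y`) produces a
geometric sum, that is, a power of `v` times a `v`-integer. Only `e₁ⁿ e₂` involves three terms.
Multiplying a PBW monomial by a generator amounts to moving it past one power after another.
-/

noncomputable section

/-- The PBW monomial `B(a,b,c,d) = b₁^a b₂^b b₃^c b₄^d`. -/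
def Bmon (a b c d : ℕ) : UC2 := b1 ^ a * b2 ^ b * b3 ^ c * b4 ^ d

/-- The balanced `v`-integer `[n]_v = v^{n-1} + v^{n-3} + ⋯ + v^{1-n}`, written as a sum rather than
as the quotient `(v^n - v^{-n}) / (v - v^{-1})` so that it keeps its meaning at `v = ±1`. -/
def qInt {F : Type*} [Field F] (v : F) (n : ℕ) : F :=
  ∑ i ∈ Finset.range n, v ^ i * v⁻¹ ^ (n - 1 - i)

section QInt

variable {F : Type*} [Field F] {v : F}

lemma qInt_zero (v : F) : qInt v 0 = 0 := by simp [qInt]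

lemma qInt_one (v : F) : qInt v 1 = 1 := by simp [qInt]

lemma qInt_succ (v : F) (n : ℕ) : qInt v (n + 1) = v ^ n + v⁻¹ * qInt v n :=
  geom_sum₂_succ_eq v v⁻¹

lemma qInt_two (v : F) : qInt v 2 = v + v⁻¹ := by
  rw [qInt_succ, qInt_one, pow_one, mul_one]

lemma qInt_three (hv : v ≠ 0) : qInt v 3 = v ^ 2 + 1 + (v ^ 2)⁻¹ := by
  rw [qInt_succ, qInt_two, mul_add, inv_mul_cancel₀ hv, ← pow_two, inv_pow, add_assoc]

lemma qInt_eq_div (hv : v ≠ v⁻¹) (n : ℕ) : qInt v n = (v ^ n - v⁻¹ ^ n) / (v - v⁻¹) :=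
  geom₂_sum hv n

lemma ne_zero_of_qInt_two_ne_zero (hv : qInt v 2 ≠ 0) : v ≠ 0 := by
  rintro rfl
  simp [qInt_two] at hv

lemma qInt_succ_mul_zpow (hv : v ≠ 0) (n : ℕ) :
    qInt v (n + 1) * v ^ (n : ℤ) = (v ^ 2) ^ n + qInt v n * v ^ (n - 1 : ℤ) := by
  rw [qInt_succ, zpow_sub_one₀ hv, zpow_natCast]
  ring

lemma qInt_mul_qInt_succ (hv : v ≠ 0) (n : ℕ) : qInt v n * qInt v (n + 1)
    = qInt v n * v ^ (n - 1 : ℤ) * qInt v 2 + qInt v (n - 1) * qInt v n * (v ^ 2)⁻¹ := by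
  rcases n with _ | n
  · simp [qInt_zero]
  · rw [qInt_succ v (n + 1), qInt_two, Nat.add_sub_cancel, qInt_succ, Nat.cast_succ,
      add_sub_cancel_right, zpow_natCast]
    field_simp
    ring

lemma sq_pow_eq_zpow_two_mul (v : F) (n : ℕ) : (v ^ 2) ^ n = v ^ (2 * n : ℤ) := by
  rw [zpow_mul, zpow_natCast, zpow_ofNat]

lemma geom_sum₂_one_inv_sq_eq (hv : v ≠ 0) (n : ℕ) :
    ∑ i ∈ Finset.range n, 1 ^ i * (v ^ 2)⁻¹ ^ (n - 1 - i) = v ^ (1 - n : ℤ) * qInt v n := by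
  induction n with
  | zero => simp [qInt_zero]
  | succ n ih =>
    rw [Nat.add_sub_cancel, geom_sum₂_succ_eq, ih, qInt_succ, Nat.cast_succ, zpow_sub₀ hv,
      zpow_sub₀ hv, zpow_add₀ hv, zpow_natCast]
    field_simp
    simp

end QInt

section SkewCommutation

variable {R A : Type*} [CommRing R] [Semiring A] [Algebra R A] {s t : R} {x y z : A}

lemma mul_pow_of_mul_eq_smul_add (hxy : x * y = s • (y * x) + z) (hzy : z * y = t • (y * z))
    (n : ℕ) :
    x * y ^ n = s ^ n • (y ^ n * x)
      + (∑ i ∈ Finset.range n, s ^ i * t ^ (n - 1 - i)) • (y ^ (n - 1) * z) := by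
  induction n with
  | zero => simp
  | succ n ih =>
    have absorb : (∑ i ∈ Finset.range n, s ^ i * t ^ (n - 1 - i)) • (y ^ (n - 1) * (y * z))
        = (∑ i ∈ Finset.range n, s ^ i * t ^ (n - 1 - i)) • (y ^ n * z) := by
      cases n <;> simp [pow_succ, mul_assoc]
    rw [pow_succ, ← mul_assoc, ih, add_mul, smul_mul_assoc, smul_mul_assoc, mul_assoc, hxy,
      mul_assoc _ z y, hzy, Nat.add_sub_cancel, geom_sum₂_succ_eq, mul_add, mul_smul_comm,
      mul_smul_comm, smul_comm _ t, absorb, ← mul_assoc, ← pow_succ]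
    module

lemma pow_mul_of_mul_eq_smul_add (hxy : x * y = s • (y * x) + z) (hxz : x * z = t • (z * x))
    (n : ℕ) :
    x ^ n * y = s ^ n • (y * x ^ n)
      + (∑ i ∈ Finset.range n, s ^ i * t ^ (n - 1 - i)) • (z * x ^ (n - 1)) := by
  have hyx' : MulOpposite.op y * MulOpposite.op x
      = s • (MulOpposite.op x * MulOpposite.op y) + MulOpposite.op z := by
    simpa using congrArg MulOpposite.op hxy
  have hzx' : MulOpposite.op z * MulOpposite.op x
      = t • (MulOpposite.op x * MulOpposite.op z) := by
    simpa using congrArg MulOpposite.op hxz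
  simpa using congrArg MulOpposite.unop (mul_pow_of_mul_eq_smul_add hyx' hzx' n)

lemma mul_pow_of_mul_eq_smul (hxy : x * y = s • (y * x)) (n : ℕ) :
    x * y ^ n = s ^ n • (y ^ n * x) := by
  simpa using mul_pow_of_mul_eq_smul_add (z := (0 : A)) (t := s) (by simpa using hxy) (by simp) n

lemma pow_mul_of_mul_eq_smul (hxy : x * y = s • (y * x)) (n : ℕ) :
    x ^ n * y = s ^ n • (y * x ^ n) := by
  simpa using pow_mul_of_mul_eq_smul_add (z := (0 : A)) (t := s) (by simpa using hxy) (by simp) n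

end SkewCommutation

/-- A pair of elements of an `F`-algebra satisfying the `v`-Serre relations of type `C₂`; in other
words, a homomorphism to `A` from the algebra `U_v⁺(C₂)`. -/
structure SerrePair {F : Type*} [Field F] (v : F) (A : Type*) [Ring A] [Algebra F A] where
  e₁ : A
  e₂ : A
  cubic : e₁ ^ 3 * e₂ - qInt v 3 • (e₁ ^ 2 * e₂ * e₁) + qInt v 3 • (e₁ * e₂ * e₁ ^ 2)
    - e₂ * e₁ ^ 3 = 0
  quadratic : e₂ ^ 2 * e₁ - qInt (v ^ 2) 2 • (e₂ * e₁ * e₂) + e₁ * e₂ ^ 2 = 0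

namespace SerrePair

variable {F A : Type*} [Field F] {v : F} [Ring A] [Algebra F A] (p : SerrePair v A)

/-- The root vector of weight `α₁ + α₂`. -/
def b₂ : A := p.e₁ * p.e₂ - v ^ 2 • (p.e₂ * p.e₁)

/-- The root vector of weight `2α₁ + α₂`. -/
def b₃ : A := (qInt v 2)⁻¹ • (p.e₁ * p.b₂ - p.b₂ * p.e₁)

/-- The PBW monomial with exponents `a, b, c, d` in the convex order `α₂, α₁ + α₂, 2α₁ + α₂, α₁`
of the positive roots. -/
def pbw (a b c d : ℕ) : A := p.e₂ ^ a * p.b₂ ^ b * p.b₃ ^ c * p.e₁ ^ d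

lemma e₁_mul_e₂ : p.e₁ * p.e₂ = v ^ 2 • (p.e₂ * p.e₁) + p.b₂ := by
  rw [b₂, add_sub_cancel]

lemma b₂_mul_e₂ (hv : v ≠ 0) : p.b₂ * p.e₂ = (v ^ 2)⁻¹ • (p.e₂ * p.b₂) := by
  have h := p.quadratic
  rw [qInt_two] at h
  rw [← sub_eq_zero, ← h, b₂]
  simp only [sub_mul, mul_sub, smul_mul_assoc, mul_smul_comm, pow_two p.e₂, mul_assoc]
  match_scalars <;> field_simp
  ring

lemma e₁_mul_b₂ (hv : qInt v 2 ≠ 0) :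
    p.e₁ * p.b₂ = p.b₂ * p.e₁ + qInt v 2 • p.b₃ := by
  rw [b₃, smul_inv_smul₀ hv, add_sub_cancel]

lemma e₁_mul_b₃ (hv : v ≠ 0) : p.e₁ * p.b₃ = (v ^ 2)⁻¹ • (p.b₃ * p.e₁) := by
  have h := p.cubic
  rw [qInt_three hv] at h
  have double_comm : p.e₁ * (p.e₁ * p.b₂ - p.b₂ * p.e₁)
      = (v ^ 2)⁻¹ • ((p.e₁ * p.b₂ - p.b₂ * p.e₁) * p.e₁) := by
    rw [← sub_eq_zero, ← h, b₂]
    simp only [sub_mul, mul_sub, smul_mul_assoc, mul_smul_comm, pow_succ, pow_zero, one_mul,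
      mul_assoc]
    match_scalars <;> field_simp <;> ring
  rw [b₃, mul_smul_comm, double_comm, smul_comm, smul_mul_assoc]

lemma b₃_mul_e₂ (hv : v ≠ 0) : p.b₃ * p.e₂
    = p.e₂ * p.b₃ + (((v ^ 2)⁻¹ - 1) * (qInt v 2)⁻¹) • p.b₂ ^ 2 := by
  have comm_mul_e₂ : (p.e₁ * p.b₂ - p.b₂ * p.e₁) * p.e₂
      = p.e₂ * (p.e₁ * p.b₂ - p.b₂ * p.e₁) + ((v ^ 2)⁻¹ - 1) • p.b₂ ^ 2 := by
    have e₁b₂e₂ : p.e₁ * p.b₂ * p.e₂ = p.e₂ * (p.e₁ * p.b₂) + (v ^ 2)⁻¹ • p.b₂ ^ 2 := by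
      rw [mul_assoc, p.b₂_mul_e₂ hv, mul_smul_comm, ← mul_assoc, p.e₁_mul_e₂, add_mul,
        smul_mul_assoc, smul_add, inv_smul_smul₀ (pow_ne_zero 2 hv), mul_assoc, pow_two p.b₂]
    have b₂e₁e₂ : p.b₂ * p.e₁ * p.e₂ = p.e₂ * (p.b₂ * p.e₁) + p.b₂ ^ 2 := by
      rw [mul_assoc, p.e₁_mul_e₂, mul_add, mul_smul_comm, ← mul_assoc, p.b₂_mul_e₂ hv,
        smul_mul_assoc, smul_inv_smul₀ (pow_ne_zero 2 hv), mul_assoc, pow_two p.b₂]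
    rw [sub_mul, e₁b₂e₂, b₂e₁e₂, mul_sub]
    module
  rw [b₃, smul_mul_assoc, comm_mul_e₂, mul_smul_comm, mul_comm _ (qInt v 2)⁻¹]
  module

-- The relation comes from straightening `e₁ b₃ e₂` in two ways: `e₁` past `b₃` first, or `b₃` past
-- `e₂` first.
lemma b₃_mul_b₂ (hv : qInt v 2 ≠ 0) : p.b₃ * p.b₂ = (v ^ 2)⁻¹ • (p.b₂ * p.b₃) := by
  have hv₀ := ne_zero_of_qInt_two_ne_zero hv
  set κ := ((v ^ 2)⁻¹ - 1) * (qInt v 2)⁻¹ with hκ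
  have e₁b₃e₂ : p.e₁ * (p.b₃ * p.e₂)
      = (v ^ 2)⁻¹ • (p.b₃ * p.b₂) + (p.e₂ * p.b₃ + κ • p.b₂ ^ 2) * p.e₁ := by
    rw [← mul_assoc, p.e₁_mul_b₃ hv₀, smul_mul_assoc, mul_assoc, p.e₁_mul_e₂, mul_add,
      mul_smul_comm, smul_add, inv_smul_smul₀ (pow_ne_zero 2 hv₀), ← mul_assoc, p.b₃_mul_e₂ hv₀,
      add_comm]
  have e₁e₂b₃ : p.e₁ * (p.e₂ * p.b₃) = p.e₂ * p.b₃ * p.e₁ + p.b₂ * p.b₃ := by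
    rw [← mul_assoc, p.e₁_mul_e₂, add_mul, smul_mul_assoc, mul_assoc, p.e₁_mul_b₃ hv₀,
      mul_smul_comm, smul_inv_smul₀ (pow_ne_zero 2 hv₀), mul_assoc]
  have e₁b₂b₂ : p.e₁ * p.b₂ ^ 2
      = p.b₂ ^ 2 * p.e₁ + qInt v 2 • (p.b₃ * p.b₂ + p.b₂ * p.b₃) := by
    rw [pow_two, ← mul_assoc, p.e₁_mul_b₂ hv, add_mul, mul_assoc, p.e₁_mul_b₂ hv]
    simp only [mul_add, mul_smul_comm, smul_mul_assoc, mul_assoc]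
    module
  have hκ₂ : κ * qInt v 2 = (v ^ 2)⁻¹ - 1 := inv_mul_cancel_right₀ hv _
  have straightened : (v ^ 2)⁻¹ • (p.b₃ * p.b₂)
      = p.b₂ * p.b₃ + ((v ^ 2)⁻¹ - 1) • (p.b₃ * p.b₂ + p.b₂ * p.b₃) := by
    rw [p.b₃_mul_e₂ hv₀, ← hκ, mul_add, mul_smul_comm, e₁e₂b₃, e₁b₂b₂, smul_add,
      smul_smul, hκ₂, add_mul, smul_mul_assoc] at e₁b₃e₂
    linear_combination (norm := module) -e₁b₃e₂
  linear_combination (norm := module) straightened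

lemma e₁_mul_e₂_pow (hv : v ≠ 0) (n : ℕ) : p.e₁ * p.e₂ ^ n
    = (v ^ 2) ^ n • (p.e₂ ^ n * p.e₁) + qInt (v ^ 2) n • (p.e₂ ^ (n - 1) * p.b₂) :=
  mul_pow_of_mul_eq_smul_add p.e₁_mul_e₂ (p.b₂_mul_e₂ hv) n

lemma e₁_mul_b₂_pow (hv : qInt v 2 ≠ 0) (n : ℕ) : p.e₁ * p.b₂ ^ n
    = p.b₂ ^ n * p.e₁ + (qInt v 2 * qInt v n * v ^ (1 - n : ℤ)) • (p.b₂ ^ (n - 1) * p.b₃) := by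
  have hb : (qInt v 2 • p.b₃) * p.b₂ = (v ^ 2)⁻¹ • (p.b₂ * (qInt v 2 • p.b₃)) := by
    rw [smul_mul_assoc, p.b₃_mul_b₂ hv, mul_smul_comm, smul_comm]
  rw [mul_pow_of_mul_eq_smul_add (s := (1 : F)) (by rw [one_smul, p.e₁_mul_b₂ hv]) hb,
    geom_sum₂_one_inv_sq_eq (ne_zero_of_qInt_two_ne_zero hv), mul_smul_comm, one_pow, one_smul,
    smul_smul]
  congr 2
  ring

lemma b₃_pow_mul_e₂ (hv : qInt v 2 ≠ 0) (n : ℕ) : p.b₃ ^ n * p.e₂ = p.e₂ * p.b₃ ^ n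
    - ((v - v⁻¹) * v ^ (1 - 2 * n : ℤ) * qInt (v ^ 2) n * (qInt v 2)⁻¹)
      • (p.b₂ ^ 2 * p.b₃ ^ (n - 1)) := by
  have hv₀ := ne_zero_of_qInt_two_ne_zero hv
  set κ := ((v ^ 2)⁻¹ - 1) * (qInt v 2)⁻¹ with hκ
  have hb : p.b₃ * (κ • p.b₂ ^ 2) = ((v ^ 2) ^ 2)⁻¹ • ((κ • p.b₂ ^ 2) * p.b₃) := by
    rw [mul_smul_comm, mul_pow_of_mul_eq_smul (p.b₃_mul_b₂ hv) 2, smul_mul_assoc, smul_comm,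
      inv_pow]
  have coeff : (v ^ 2) ^ (1 - n : ℤ) * qInt (v ^ 2) n * κ
      = -((v - v⁻¹) * v ^ (1 - 2 * n : ℤ) * qInt (v ^ 2) n * (qInt v 2)⁻¹) := by
    have sq_zpow : (v ^ 2) ^ (1 - n : ℤ) = v * v ^ (1 - 2 * n : ℤ) := by
      rw [← zpow_natCast, ← zpow_mul, ← zpow_one_add₀ hv₀]
      congr 1
      push_cast
      ring
    rw [sq_zpow, hκ]
    field_simp
    ring
  rw [pow_mul_of_mul_eq_smul_add (s := (1 : F)) (by rw [one_smul, p.b₃_mul_e₂ hv₀]) hb,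
    geom_sum₂_one_inv_sq_eq (pow_ne_zero 2 hv₀), smul_mul_assoc, smul_smul, coeff, one_pow,
    one_smul]
  module

lemma e₁_pow_mul_e₂ (hv : qInt v 2 ≠ 0) (n : ℕ) : p.e₁ ^ n * p.e₂
    = (v ^ 2) ^ n • (p.e₂ * p.e₁ ^ n)
      + (qInt v n * v ^ (n - 1 : ℤ)) • (p.b₂ * p.e₁ ^ (n - 1))
      + (qInt v (n - 1) * qInt v n) • (p.b₃ * p.e₁ ^ (n - 2)) := by
  have hv₀ := ne_zero_of_qInt_two_ne_zero hv
  induction n with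
  | zero => simp [qInt_zero]
  | succ n ih =>
    have absorb_b₂ : (qInt v n * v ^ (n - 1 : ℤ)) • (p.b₂ * p.e₁ * p.e₁ ^ (n - 1))
        = (qInt v n * v ^ (n - 1 : ℤ)) • (p.b₂ * p.e₁ ^ n) := by
      cases n <;> simp [qInt_zero, pow_succ', mul_assoc]
    have absorb_b₃ : (qInt v (n - 1) * qInt v n) • (p.b₃ * p.e₁ * p.e₁ ^ (n - 2))
        = (qInt v (n - 1) * qInt v n) • (p.b₃ * p.e₁ ^ (n - 1)) := by
      rcases n with _ | _ | n <;> simp [qInt_zero, pow_succ', mul_assoc]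
    calc p.e₁ ^ (n + 1) * p.e₂
        = (v ^ 2) ^ n • (p.e₁ * p.e₂ * p.e₁ ^ n)
          + (qInt v n * v ^ (n - 1 : ℤ)) • (p.e₁ * p.b₂ * p.e₁ ^ (n - 1))
          + (qInt v (n - 1) * qInt v n) • (p.e₁ * p.b₃ * p.e₁ ^ (n - 2)) := by
          rw [pow_succ', mul_assoc, ih]
          simp only [mul_add, mul_smul_comm, mul_assoc]
      _ = (v ^ 2) ^ (n + 1) • (p.e₂ * p.e₁ ^ (n + 1))
          + ((v ^ 2) ^ n + qInt v n * v ^ (n - 1 : ℤ)) • (p.b₂ * p.e₁ ^ n)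
          + (qInt v n * v ^ (n - 1 : ℤ) * qInt v 2 + qInt v (n - 1) * qInt v n * (v ^ 2)⁻¹)
            • (p.b₃ * p.e₁ ^ (n - 1)) := by
          rw [p.e₁_mul_e₂, p.e₁_mul_b₂ hv, p.e₁_mul_b₃ hv₀]
          simp only [add_mul, smul_add, smul_mul_assoc]
          rw [absorb_b₂, smul_comm _ (v ^ 2)⁻¹, absorb_b₃, mul_assoc p.e₂, ← pow_succ']
          module
      _ = _ := by
          rw [← qInt_succ_mul_zpow hv₀, ← qInt_mul_qInt_succ hv₀, Nat.cast_succ,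
            add_sub_cancel_right]
          rfl

lemma pbw_zero_mul_e₁_pow (a b c d : ℕ) : p.pbw a b c 0 * p.e₁ ^ d = p.pbw a b c d := by
  rw [pbw, pow_zero, mul_one, pbw]

lemma pbw_zero_mul_b₃ (a b c : ℕ) : p.pbw a b c 0 * p.b₃ = p.pbw a b (c + 1) 0 := by
  simp only [pbw, pow_zero, mul_one, mul_assoc, ← pow_succ]

lemma pbw_zero_mul_b₂ (hv : qInt v 2 ≠ 0) (a b c : ℕ) :
    p.pbw a b c 0 * p.b₂ = (v ^ 2)⁻¹ ^ c • p.pbw a (b + 1) c 0 := by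
  rw [pbw, pow_zero, mul_one, mul_assoc, pow_mul_of_mul_eq_smul (p.b₃_mul_b₂ hv)]
  simp only [pbw, pow_zero, mul_one, mul_smul_comm, mul_assoc, pow_succ p.b₂]

lemma pbw_zero_mul_e₂ (hv : qInt v 2 ≠ 0) (a b c : ℕ) : p.pbw a b c 0 * p.e₂
    = (v ^ 2)⁻¹ ^ b • p.pbw (a + 1) b c 0
      - ((v - v⁻¹) * v ^ (1 - 2 * c : ℤ) * qInt (v ^ 2) c * (qInt v 2)⁻¹)
        • p.pbw a (b + 2) (c - 1) 0 := by
  have b₂_past := pow_mul_of_mul_eq_smul (p.b₂_mul_e₂ (ne_zero_of_qInt_two_ne_zero hv)) b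
  rw [pbw, pow_zero, mul_one, mul_assoc, p.b₃_pow_mul_e₂ hv, mul_sub, ← mul_assoc,
    mul_assoc (p.e₂ ^ a) _ p.e₂, b₂_past]
  simp only [pbw, pow_zero, mul_one, mul_smul_comm, smul_mul_assoc, mul_assoc, pow_succ p.e₂,
    pow_add p.b₂]

lemma pbw_mul_e₂ (hv : qInt v 2 ≠ 0) (a b c d : ℕ) : p.pbw a b c d * p.e₂
    = (qInt v d * v ^ ((d : ℤ) - 2 * c - 1)) • p.pbw a (b + 1) c (d - 1)
      + v ^ (2 * ((d : ℤ) - b)) • p.pbw (a + 1) b c d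
      - ((v - v⁻¹) * v ^ (2 * (d : ℤ) - 2 * c + 1) * qInt (v ^ 2) c * (qInt v 2)⁻¹)
        • p.pbw a (b + 2) (c - 1) d
      + (qInt v (d - 1) * qInt v d) • p.pbw a b (c + 1) (d - 2) := by
  have hv₀ := ne_zero_of_qInt_two_ne_zero hv
  have exp_b₂ : v ^ ((d : ℤ) - 2 * c - 1) = v ^ (d - 1 : ℤ) * (v ^ 2)⁻¹ ^ c := by
    rw [inv_pow, sq_pow_eq_zpow_two_mul, ← zpow_neg, ← zpow_add₀ hv₀]
    ring_nf
  have exp_e₂ : v ^ (2 * ((d : ℤ) - b)) = (v ^ 2) ^ d * (v ^ 2)⁻¹ ^ b := by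
    rw [inv_pow, sq_pow_eq_zpow_two_mul, sq_pow_eq_zpow_two_mul, ← zpow_neg, ← zpow_add₀ hv₀]
    ring_nf
  have exp_b₂_sq : v ^ (2 * (d : ℤ) - 2 * c + 1) = (v ^ 2) ^ d * v ^ (1 - 2 * c : ℤ) := by
    rw [sq_pow_eq_zpow_two_mul, ← zpow_add₀ hv₀]
    ring_nf
  rw [← pbw_zero_mul_e₁_pow, mul_assoc, p.e₁_pow_mul_e₂ hv]
  simp only [mul_add, mul_smul_comm, ← mul_assoc, p.pbw_zero_mul_e₂ hv, p.pbw_zero_mul_b₂ hv,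
    pbw_zero_mul_b₃, sub_mul, smul_mul_assoc, pbw_zero_mul_e₁_pow]
  rw [exp_b₂, exp_e₂, exp_b₂_sq]
  module

lemma e₁_mul_pbw (hv : qInt v 2 ≠ 0) (a b c d : ℕ) : p.e₁ * p.pbw a b c d
    = (qInt v 2 * qInt v b * v ^ (2 * (a : ℤ) - b + 1)) • p.pbw a (b - 1) (c + 1) d
      + v ^ (2 * (a : ℤ) - 2 * c) • p.pbw a b c (d + 1)
      + qInt (v ^ 2) a • p.pbw (a - 1) (b + 1) c d := by
  have hv₀ := ne_zero_of_qInt_two_ne_zero hv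
  have e₁_past : p.e₂ ^ a * (p.e₁ * p.b₂ ^ b) * p.b₃ ^ c * p.e₁ ^ d
      = (v ^ 2)⁻¹ ^ c • p.pbw a b c (d + 1)
        + (qInt v 2 * qInt v b * v ^ (1 - b : ℤ)) • p.pbw a (b - 1) (c + 1) d := by
    rw [p.e₁_mul_b₂_pow hv, mul_add, add_mul, add_mul, ← mul_assoc, mul_assoc _ p.e₁,
      mul_pow_of_mul_eq_smul (p.e₁_mul_b₃ hv₀)]
    simp only [pbw, mul_smul_comm, smul_mul_assoc, mul_assoc, pow_succ' p.b₃, pow_succ' p.e₁]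
  have exp_b₃ : v ^ (2 * (a : ℤ) - b + 1) = (v ^ 2) ^ a * v ^ (1 - b : ℤ) := by
    rw [sq_pow_eq_zpow_two_mul, ← zpow_add₀ hv₀]
    ring_nf
  have exp_e₁ : v ^ (2 * (a : ℤ) - 2 * c) = (v ^ 2) ^ a * (v ^ 2)⁻¹ ^ c := by
    rw [inv_pow, sq_pow_eq_zpow_two_mul, sq_pow_eq_zpow_two_mul, ← zpow_neg, ← zpow_add₀ hv₀]
    ring_nf
  calc p.e₁ * p.pbw a b c d
      = (v ^ 2) ^ a • (p.e₂ ^ a * (p.e₁ * p.b₂ ^ b) * p.b₃ ^ c * p.e₁ ^ d)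
        + qInt (v ^ 2) a • p.pbw (a - 1) (b + 1) c d := by
        simp only [pbw, ← mul_assoc, p.e₁_mul_e₂_pow hv₀]
        simp only [add_mul, smul_mul_assoc, mul_assoc, pow_succ' p.b₂]
    _ = _ := by
        rw [e₁_past, exp_b₃, exp_e₁]
        module

lemma pbw_mul_e₁ (a b c d : ℕ) : p.pbw a b c d * p.e₁ = p.pbw a b c (d + 1) := by
  rw [pbw, mul_assoc, ← pow_succ, pbw]

lemma e₂_mul_pbw (a b c d : ℕ) : p.e₂ * p.pbw a b c d = p.pbw (a + 1) b c d := by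
  simp only [pbw, ← mul_assoc, ← pow_succ']

end SerrePair

lemma q_pow_ne_one_s13 {n : ℕ} (hn : n ≠ 0) : q ^ n ≠ 1 := by
  rw [q, ← RatFunc.algebraMap_X, ← map_pow, ← map_one (algebraMap (Polynomial ℚ) (RatFunc ℚ)),
    (RatFunc.algebraMap_injective ℚ).ne_iff]
  exact fun h => hn (by simpa using congrArg Polynomial.natDegree h)

lemma q_pow_ne_inv {n : ℕ} (hn : n ≠ 0) : q ^ n ≠ (q ^ n)⁻¹ := by
  rw [Ne, ← mul_eq_one_iff_eq_inv₀ (pow_ne_zero n RatFunc.X_ne_zero), ← pow_add]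
  exact q_pow_ne_one_s13 (by lia)

lemma qn1_eq_qInt (m : ℕ) : qn1 m = qInt q m := by
  have hq : q ≠ q⁻¹ := by simpa using q_pow_ne_inv one_ne_zero
  rw [qInt_eq_div hq, qn1, qbra, qbra, pow_one, pow_one]

lemma qn2_eq_qInt (m : ℕ) : qn2 m = qInt (q ^ 2) m := by
  rw [qInt_eq_div (q_pow_ne_inv two_ne_zero), qn2, qbra, qbra, pow_mul, pow_mul, inv_pow]

lemma qInt_q_two_ne_zero : qInt q 2 ≠ 0 := by
  intro h
  apply q_pow_ne_one_s13 (n := 4) (by norm_num)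
  have hq : q ≠ 0 := RatFunc.X_ne_zero
  rw [qInt_two] at h
  field_simp at h
  linear_combination (q ^ 2 - 1) * h

/-- The Chevalley generators of `U_q⁺(C₂)` as a Serre pair. -/
def serrePairUC2 : SerrePair q UC2 where
  e₁ := e1
  e₂ := e2
  cubic := by
    have h := RingQuot.mkAlgHom_rel K SerreC2.rel1
    simpa only [map_sub, map_add, map_mul, map_pow, map_smul, map_zero, qn1_eq_qInt, e1, e2] using h
  quadratic := by
    have h := RingQuot.mkAlgHom_rel K SerreC2.rel2
    simpa only [map_sub, map_add, map_mul, map_pow, map_smul, map_zero, qn2_eq_qInt, e1, e2] using h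

lemma Bmon_eq_pbw (a b c d : ℕ) : Bmon a b c d = serrePairUC2.pbw a b c d := by
  have hb₃ : b3 = serrePairUC2.b₃ := by rw [b3, qn1_eq_qInt]; rfl
  rw [Bmon, hb₃]
  rfl

theorem statement13_general {F A : Type*} [Field F] [Ring A] [Algebra F A] {v : F}
    (hv : qInt v 2 ≠ 0) (p : SerrePair v A) (a b c d : ℕ) :
    p.pbw a b c d * p.e₁ = p.pbw a b c (d + 1) ∧
    p.pbw a b c d * p.e₂
      = (qInt v d * v ^ ((d : ℤ) - 2 * c - 1)) • p.pbw a (b + 1) c (d - 1)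
        + v ^ (2 * ((d : ℤ) - b)) • p.pbw (a + 1) b c d
        - ((v - v⁻¹) * v ^ (2 * (d : ℤ) - 2 * c + 1) * qInt (v ^ 2) c * (qInt v 2)⁻¹)
          • p.pbw a (b + 2) (c - 1) d
        + (qInt v (d - 1) * qInt v d) • p.pbw a b (c + 1) (d - 2) ∧
    p.e₁ * p.pbw a b c d
      = (qInt v 2 * qInt v b * v ^ (2 * (a : ℤ) - b + 1)) • p.pbw a (b - 1) (c + 1) d
        + v ^ (2 * (a : ℤ) - 2 * c) • p.pbw a b c (d + 1)
        + qInt (v ^ 2) a • p.pbw (a - 1) (b + 1) c d ∧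
    p.e₂ * p.pbw a b c d = p.pbw (a + 1) b c d :=
  ⟨p.pbw_mul_e₁ a b c d, p.pbw_mul_e₂ hv a b c d, p.e₁_mul_pbw hv a b c d, p.e₂_mul_pbw a b c d⟩

/-- multiplication of PBW monomials of `U_q⁺(C₂)` by the generators.
(Terms with a negative index appear with vanishing coefficient, so truncated
subtraction on `ℕ` realizes the stated convention.) -/
theorem statement13 (a b c d : ℕ) :
    Bmon a b c d * e1 = Bmon a b c (d + 1) ∧
    Bmon a b c d * e2
      = (qn1 d * q ^ ((d : ℤ) - 2 * c - 1)) • Bmon a (b + 1) c (d - 1)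
        + (q ^ (2 * ((d : ℤ) - b))) • Bmon (a + 1) b c d
        - (qbra 1 * q ^ (2 * (d : ℤ) - 2 * c + 1) * qn2 c * (qn1 2)⁻¹) • Bmon a (b + 2) (c - 1) d
        + (qn1 (d - 1) * qn1 d) • Bmon a b (c + 1) (d - 2) ∧
    e1 * Bmon a b c d
      = (qn1 2 * qn1 b * q ^ (2 * (a : ℤ) - b + 1)) • Bmon a (b - 1) (c + 1) d
        + (q ^ (2 * (a : ℤ) - 2 * c)) • Bmon a b c (d + 1)
        + qn2 a • Bmon (a - 1) (b + 1) c d ∧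
    e2 * Bmon a b c d = Bmon (a + 1) b c d := by
  have qbra_one : qbra 1 = q - q⁻¹ := by rw [qbra, pow_one, pow_one]
  simp only [Bmon_eq_pbw, qn1_eq_qInt, qn2_eq_qInt, qbra_one]
  exact statement13_general qInt_q_two_ne_zero serrePairUC2 a b c d
end
end
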